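/- Suppose the formula φ(x̄,ȳ) does not exemplify SOP₁ in T (in particular this holds if T is NSOP₁). Assume M₁ ≺ M₂ ≺ 𝔠, p is a (not necessarily complete) type over M₂ containing the formula φ(x̄, b̄*) for some b̄* ∈ M₂ \ M₁. Then there is a finite q' ⊆ tp(b̄*/M₁) such that at least one of the following holds: (i) for every b̄ ∈ M₁ realizing q'(ȳ), φ(x̄, b̄) ∉ p; or (ii) for every b̄ ∈ M₁ realizing q'(ȳ), the set {φ(x̄, b̄), φ(x̄, b̄*)} is consistent. -/

import Mathlib

open FirstOrder FirstOrder.Language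

namespace SopPaper

variable {L : FirstOrder.Language.{0, 0}}

/-- A first-order formula with parameters from `M`, in free variables indexed by `Fin m`. -/
structure ParamFormula (L : FirstOrder.Language.{0, 0}) (M : Type*) [L.Structure M] (m : ℕ) where
  k : ℕ
  toFormula : L.Formula (Fin m ⊕ Fin k)
  par : Fin k → M

variable {M : Type*} [L.Structure M]

/-- Realization of a formula with parameters at a tuple `e`. -/
def ParamFormula.Realize {m : ℕ} (ψ : ParamFormula L M m) (e : Fin m → M) : Prop :=
  ψ.toFormula.Realize (Sum.elim e ψ.par)

/-- A tuple `e` realizes the partial type `p`. -/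
def Realizes {m : ℕ} (p : Set (ParamFormula L M m)) (e : Fin m → M) : Prop :=
  ∀ ψ ∈ p, ψ.Realize e

/-- A partial type (over the monster model) is consistent iff it is realized. -/
def Consistent {m : ℕ} (p : Set (ParamFormula L M m)) : Prop :=
  ∃ e, Realizes p e

/-- The restriction `ρ ↾ k` of an infinite branch `ρ ∈ 2^ω` to a finite sequence. -/
def restrict (ρ : ℕ → Bool) (k : ℕ) : List Bool :=
  List.ofFn fun i : Fin k => ρ i

/-- `φ(x̄, ȳ)` exemplifies SOP₁ in the structure `M` (thought of as the monster model):
there is a tree of parameters `⟨ā_η : η ∈ 2^{<ω}⟩` such that every branch is consistent,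
and `{φ(x̄, ā_η), φ(x̄, ā_{ν⌢⟨1⟩})}` is inconsistent whenever `ν⌢⟨0⟩ ⊴ η`. -/
def ExemplifiesSOP1 {mx my : ℕ} (φ : L.Formula (Fin mx ⊕ Fin my)) (M : Type*)
    [L.Structure M] : Prop :=
  ∃ a : List Bool → Fin my → M,
    (∀ ρ : ℕ → Bool, ∃ e : Fin mx → M, ∀ k : ℕ,
        φ.Realize (Sum.elim e (a (restrict ρ k)))) ∧
    ∀ ν η : List Bool, (ν ++ [false]) <+: η →
      ¬ ∃ e : Fin mx → M,
          φ.Realize (Sum.elim e (a η)) ∧ φ.Realize (Sum.elim e (a (ν ++ [true])))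

/-- `φ(x̄, ȳ)` exemplifies SOP₁' in the structure `M`:  there is a tree of parameters
`⟨ā_η : η ∈ 2^{<ω}⟩` such that for every branch `ρ ∈ 2^ω` the signed set
`{φ(x̄, ā_{ρ↾n})^{ρ(n)} : n < ω}` is consistent, and `{φ(x̄, ā_η), φ(x̄, ā_ν)}` is
inconsistent whenever `ν⌢⟨0⟩ ⊴ η`. -/
def ExemplifiesSOP1' {mx my : ℕ} (φ : L.Formula (Fin mx ⊕ Fin my)) (M : Type*)
    [L.Structure M] : Prop :=
  ∃ a : List Bool → Fin my → M,
    (∀ ρ : ℕ → Bool, ∃ e : Fin mx → M, ∀ k : ℕ,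
        (φ.Realize (Sum.elim e (a (restrict ρ k))) ↔ ρ k = true)) ∧
    ∀ ν η : List Bool, (ν ++ [false]) <+: η →
      ¬ ∃ e : Fin mx → M,
          φ.Realize (Sum.elim e (a η)) ∧ φ.Realize (Sum.elim e (a ν))

/-- The formula `¬ (∃ x̄)(φ(x̄, ȳ) ∧ φ(x̄, z̄))` in the variables `ȳ ⊕ z̄`. -/
def incompatFormula {mx my : ℕ} (φ : L.Formula (Fin mx ⊕ Fin my)) :
    L.Formula (Fin my ⊕ Fin my) :=
  (((BoundedFormula.relabel
        (Sum.elim (fun i => Sum.inr i) fun j => Sum.inl (Sum.inl j)) φ) ⊓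
      (BoundedFormula.relabel
        (Sum.elim (fun i => Sum.inr i) fun j => Sum.inl (Sum.inr j)) φ)).exs).not

/-- `rk¹_φ(p, q) ≥ n`. -/
def RankGE {mx my : ℕ} (φ : L.Formula (Fin mx ⊕ Fin my)) :
    ℕ → Set (ParamFormula L M mx) → Set (ParamFormula L M my) → Prop
  | 0, p, q => Consistent p ∧ Consistent q
  | n + 1, p, q =>
      ∃ c : Fin my → M, Realizes q c ∧
        RankGE φ n (insert ⟨my, φ, c⟩ p) q ∧
        RankGE φ n p (insert ⟨my, incompatFormula φ, c⟩ q)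

/-- `a` is a `φ`-SOP₁' tree for `p(x̄)` and `q(ȳ)` of depth `n`. -/
def IsSOP1'Tree {mx my : ℕ} (φ : L.Formula (Fin mx ⊕ Fin my))
    (p : Set (ParamFormula L M mx)) (q : Set (ParamFormula L M my))
    (n : ℕ) (a : List Bool → Fin my → M) : Prop :=
  (∀ η : List Bool, η.length = n → ∃ e : Fin mx → M, Realizes p e ∧
      ∀ ℓ : ℕ, ℓ < n →
        (φ.Realize (Sum.elim e (a (η.take ℓ))) ↔ η.getD ℓ false = true)) ∧
  (∀ η : List Bool, η.length ≤ n → Realizes q (a η)) ∧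
  (∀ ν η : List Bool, η.length ≤ n → (ν ++ [false]) <+: η →
      ¬ ∃ e : Fin mx → M,
          φ.Realize (Sum.elim e (a η)) ∧ φ.Realize (Sum.elim e (a ν)))

/-- `φ(x̄, ȳ)` exemplifies SOP₂ in the structure `M`. -/
def ExemplifiesSOP2 {mx my : ℕ} (φ : L.Formula (Fin mx ⊕ Fin my)) (M : Type*)
    [L.Structure M] : Prop :=
  ∃ a : List Bool → Fin my → M,
    (∀ ρ : ℕ → Bool, ∃ e : Fin mx → M, ∀ k : ℕ,
        φ.Realize (Sum.elim e (a (restrict ρ k)))) ∧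
    ∀ η ν : List Bool, ¬ η <+: ν → ¬ ν <+: η →
      ¬ ∃ e : Fin mx → M,
          φ.Realize (Sum.elim e (a η)) ∧ φ.Realize (Sum.elim e (a ν))


/-- `b` and `c` are incompatible: `{φ(x̄, b), φ(x̄, c)}` is inconsistent. -/
def Incompatible {mx my : ℕ} (φ : L.Formula (Fin mx ⊕ Fin my)) (b c : Fin my → M) : Prop :=
  ¬ ∃ e : Fin mx → M, φ.Realize (Sum.elim e b) ∧ φ.Realize (Sum.elim e c)

theorem Incompatible.symm {mx my : ℕ} {φ : L.Formula (Fin mx ⊕ Fin my)} {b c : Fin my → M}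
    (h : Incompatible φ b c) : Incompatible φ c b :=
  fun ⟨e, hc, hb⟩ => h ⟨e, hb, hc⟩

/-- A variant of `RankGE` in which the first type is `{φ(x̄, c) : c ∈ P}` and the second one
expresses incompatibility with all members of `Q`. -/
def ListRankGE {mx my : ℕ} (φ : L.Formula (Fin mx ⊕ Fin my)) :
    ℕ → List (Fin my → M) → List (Fin my → M) → Prop
  | 0, P, _ => ∃ e : Fin mx → M, ∀ c ∈ P, φ.Realize (Sum.elim e c)
  | n + 1, P, Q => ∃ b : Fin my → M, (∀ c ∈ Q, Incompatible φ c b) ∧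
      ListRankGE φ n (b :: P) Q ∧ ListRankGE φ n P (b :: Q)

theorem ListRankGE.mono {mx my : ℕ} {φ : L.Formula (Fin mx ⊕ Fin my)} :
    ∀ {n : ℕ} {P P' Q Q' : List (Fin my → M)}, P' ⊆ P → Q' ⊆ Q →
      ListRankGE φ n P Q → ListRankGE φ n P' Q'
  | 0, _, _, _, _, hP, _, ⟨e, he⟩ => ⟨e, fun c hc => he c (hP hc)⟩
  | _ + 1, _, _, _, _, hP, hQ, ⟨b, hb, h₁, h₀⟩ =>
    ⟨b, fun c hc => hb c (hQ hc), h₁.mono (List.cons_subset_cons _ hP) hQ,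
      h₀.mono hP (List.cons_subset_cons _ hQ)⟩

theorem exists_formula_incompatible {mx my : ℕ} (φ : L.Formula (Fin mx ⊕ Fin my)) {α : Type*}
    (c b : Fin my → α) :
    ∃ θ : L.Formula α, ∀ v : α → M, θ.Realize v ↔ Incompatible φ (v ∘ c) (v ∘ b) := by
  refine ⟨(Formula.iExs (Fin mx) (φ.relabel (Sum.elim Sum.inr (Sum.inl ∘ c)) ⊓
    φ.relabel (Sum.elim Sum.inr (Sum.inl ∘ b)))).not, fun v => ?_⟩
  simp [Incompatible, Formula.realize_not, Formula.realize_iExs, Formula.realize_inf,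
    Formula.realize_relabel, Sum.comp_elim, ← Function.comp_assoc]

theorem exists_formula_forall_mem {α β : Type*} (S : List β) (R : β → (α → M) → Prop)
    (hR : ∀ c, ∃ θ : L.Formula α, ∀ v : α → M, θ.Realize v ↔ R c v) :
    ∃ θ : L.Formula α, ∀ v : α → M, θ.Realize v ↔ ∀ c ∈ S, R c v := by
  induction S with
  | nil => exact ⟨⊤, fun v => by simp⟩
  | cons c S ih =>
    obtain ⟨θ, hθ⟩ := ih
    obtain ⟨θ', hθ'⟩ := hR c
    exact ⟨θ' ⊓ θ, fun v => by simp [hθ, hθ']⟩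

universe w in
theorem exists_formula_listRankGE {mx my : ℕ} (φ : L.Formula (Fin mx ⊕ Fin my)) (n : ℕ) :
    ∀ {α : Type w} (P Q : List (Fin my → α)), ∃ θ : L.Formula α, ∀ v : α → M,
      θ.Realize v ↔ ListRankGE φ n (P.map (v ∘ ·)) (Q.map (v ∘ ·)) := by
  induction n with
  | zero =>
    intro α P Q
    obtain ⟨θ, hθ⟩ := exists_formula_forall_mem (L := L) (M := M) P
      (fun c (v : α ⊕ Fin mx → M) => φ.Realize (Sum.elim (v ∘ Sum.inr) (v ∘ Sum.inl ∘ c)))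
      (fun c => ⟨φ.relabel (Sum.elim Sum.inr (Sum.inl ∘ c)), fun v => by
        simp [Formula.realize_relabel, Sum.comp_elim]⟩)
    refine ⟨Formula.iExs (Fin mx) θ, fun v => ?_⟩
    simp [ListRankGE, Formula.realize_iExs, hθ, ← Function.comp_assoc]
  | succ n ih =>
    intro α P Q
    obtain ⟨θ, hθ⟩ := exists_formula_forall_mem (L := L) (M := M) Q
      (fun c (v : α ⊕ Fin my → M) => Incompatible φ (v ∘ Sum.inl ∘ c) (v ∘ Sum.inr))
      (fun c => exists_formula_incompatible φ _ _)
    obtain ⟨θ₁, hθ₁⟩ := ih (α := α ⊕ Fin my) (Sum.inr :: P.map (Sum.inl ∘ ·)) (Q.map (Sum.inl ∘ ·))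
    obtain ⟨θ₀, hθ₀⟩ := ih (α := α ⊕ Fin my) (P.map (Sum.inl ∘ ·)) (Sum.inr :: Q.map (Sum.inl ∘ ·))
    refine ⟨Formula.iExs (Fin my) (θ ⊓ (θ₁ ⊓ θ₀)), fun v => ?_⟩
    simp [ListRankGE, Formula.realize_iExs, hθ, hθ₁, hθ₀, Function.comp_def]

/-- If `tp(r/A)` is finitely satisfiable both by tuples `b` of `A` with `φ(e, b)`, and by tuples of
`A` incompatible with `r`, then the rank is infinite. -/
theorem listRankGE_of_approximations {mx my : ℕ} (φ : L.Formula (Fin mx ⊕ Fin my)) {A : Set M}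
    (r : Fin my → M) (e : Fin mx → M)
    (hD : ∀ θ : L.Formula (Fin my ⊕ A), θ.Realize (Sum.elim r (↑)) →
      ∃ b : Fin my → A, θ.Realize (Sum.elim ((↑) ∘ b) (↑) : Fin my ⊕ A → M) ∧
        φ.Realize (Sum.elim e ((↑) ∘ b)))
    (hE : ∀ θ : L.Formula (Fin my ⊕ A), θ.Realize (Sum.elim r (↑)) →
      ∃ b : Fin my → A, θ.Realize (Sum.elim ((↑) ∘ b) (↑) : Fin my ⊕ A → M) ∧
        Incompatible φ ((↑) ∘ b) r) (n : ℕ) :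
    ∀ P Q : List (Fin my → A), (∀ c ∈ P, φ.Realize (Sum.elim e ((↑) ∘ c))) →
      (∀ c ∈ Q, Incompatible φ ((↑) ∘ c) r) →
      ListRankGE φ n (P.map ((↑) ∘ ·) : List (Fin my → M)) (Q.map ((↑) ∘ ·)) := by
  induction n with
  | zero => exact fun P Q hP _ => ⟨e, by simpa using hP⟩
  | succ n ih =>
    intro P Q hP hQ
    obtain ⟨θ, hθ⟩ := exists_formula_forall_mem (L := L) (M := M) Q
      (fun c (v : Fin my ⊕ A → M) => Incompatible φ (v ∘ Sum.inr ∘ c) (v ∘ Sum.inl))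
      (fun c => exists_formula_incompatible φ _ _)
    obtain ⟨θ₀, hθ₀⟩ := exists_formula_listRankGE (M := M) φ n (α := Fin my ⊕ A)
      (P.map (Sum.inr ∘ ·)) (Sum.inl :: Q.map (Sum.inr ∘ ·))
    simp only [List.map_cons, List.map_map, Function.comp_def] at hθ hθ₀ hD hE hP hQ ih ⊢
    by_cases hr : θ₀.Realize (Sum.elim r (↑))
    · obtain ⟨b, hb, hbe⟩ := hD (θ ⊓ θ₀) (Formula.realize_inf.2 ⟨(hθ _).2 hQ, hr⟩)
      obtain ⟨hbθ, hbθ₀⟩ := Formula.realize_inf.1 hb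
      refine ⟨fun i => b i, ?_, ?_, (hθ₀ _).1 hbθ₀⟩
      · simpa using (hθ _).1 hbθ
      · exact ih (b :: P) Q (by simpa using ⟨hbe, hP⟩) hQ
    · obtain ⟨d, hd, hdr⟩ := hE θ₀.not (Formula.realize_not.2 hr)
      exact absurd ((hθ₀ _).2 (ih P (d :: Q) hP (by simpa using ⟨hdr, hQ⟩)))
        (Formula.realize_not.1 hd)

/-- Trees with the properties of the parameters in `ExemplifiesSOP1`, of height `n`. -/
theorem ListRankGE.exists_tree {mx my : ℕ} {φ : L.Formula (Fin mx ⊕ Fin my)} {n : ℕ} :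
    ∀ {P Q : List (Fin my → M)} {b : Fin my → M}, ListRankGE φ (2 * n) (b :: P) Q →
      (∀ c ∈ Q, Incompatible φ c b) →
      ∃ a : List Bool → Fin my → M, a [] = b ∧
        (∀ ρ : ℕ → Bool, ∃ e : Fin mx → M, (∀ c ∈ P, φ.Realize (Sum.elim e c)) ∧
          ∀ k ≤ n, φ.Realize (Sum.elim e (a (restrict ρ k)))) ∧
        (∀ η, ∀ c ∈ Q, Incompatible φ c (a η)) ∧
        ∀ ν η : List Bool, η.length ≤ n → (ν ++ [false]) <+: η →
          Incompatible φ (a η) (a (ν ++ [true])) := by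
  induction n with
  | zero =>
    rintro P Q b ⟨e, he⟩ hb
    refine ⟨fun _ => b, rfl, fun _ => ⟨e, fun c hc => he c (by simp [hc]), fun _ _ =>
      he b (by simp)⟩, fun _ => hb, fun ν η hη h => ?_⟩
    simpa using h.length_le.trans hη
  | succ n ih =>
    intro P Q b h hb
    obtain ⟨b₁, hb₁, ⟨_, _, _, h₁⟩, b₀, hb₀, h₀, -⟩ :
      ListRankGE φ (2 * n + 1 + 1) (b :: P) Q := h
    obtain ⟨a₁, hr₁, hc₁, hQ₁, ht₁⟩ := ih (h₁.mono (List.Subset.refl _)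
      (List.subset_cons_self _ _)) hb₁
    obtain ⟨a₀, hr₀, hc₀, hQ₀, ht₀⟩ := ih h₀ hb₀
    let a : List Bool → Fin my → M
      | [] => b
      | true :: η => a₁ η
      | false :: η => a₀ η
    refine ⟨a, rfl, fun ρ => ?_, fun η c hc => ?_, fun ν η hη hνη => ?_⟩
    · have key : ∃ e : Fin mx → M, (∀ c ∈ b :: P, φ.Realize (Sum.elim e c)) ∧
          ∀ k ≤ n, φ.Realize (Sum.elim e (a (ρ 0 :: restrict (fun i => ρ (i + 1)) k))) := by
        cases ρ 0
        · exact hc₀ _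
        · exact hc₁ _
      obtain ⟨e, heP, he⟩ := key
      refine ⟨e, fun c hc => heP c (by simp [hc]), fun k hk => ?_⟩
      cases k with
      | zero => exact heP b (by simp)
      | succ k => simpa [restrict, List.ofFn_succ] using he k (by omega)
    · match η with
      | [] => exact hb c hc
      | true :: η => exact hQ₁ η c hc
      | false :: η => exact hQ₀ η c (by simp [hc])
    · match ν, η with
      | _, [] => simp at hνη
      | [], x :: η =>
        obtain rfl : x = false := by simpa using hνη
        change Incompatible φ (a₀ η) (a₁ [])
        rw [hr₁]
        exact (hQ₀ η b₁ (by simp)).symm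
      | y :: ν, x :: η =>
        obtain ⟨rfl, h'⟩ : y = x ∧ (ν ++ [false]) <+: η := by simpa using hνη
        have hη' : η.length ≤ n := by simpa using hη
        cases y
        · exact ht₀ ν η hη' h'
        · exact ht₁ ν η hη' h'

universe w in
/-- An ultraproduct of `M` carries a full tree if `M` carries trees of every finite height. -/
theorem exists_exemplifiesSOP1_of_listRankGE {M : Type w} [L.Structure M] [Nonempty M] {mx my : ℕ}
    (φ : L.Formula (Fin mx ⊕ Fin my)) (h : ∀ n, ListRankGE (M := M) φ n [] []) :
    ∃ N : Theory.ModelType.{0, 0, w} (L.completeTheory M), ExemplifiesSOP1 φ N := by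
  have tree (n : ℕ) : ∃ a : List Bool → Fin my → M,
      (∀ ρ : ℕ → Bool, ∃ e : Fin mx → M,
        ∀ k ≤ n, φ.Realize (Sum.elim e (a (restrict ρ k)))) ∧
      ∀ ν η : List Bool, η.length ≤ n → (ν ++ [false]) <+: η →
        Incompatible φ (a η) (a (ν ++ [true])) := by
    obtain ⟨b, -, hb, -⟩ := h (2 * n + 1)
    obtain ⟨a, -, hc, -, ht⟩ := hb.exists_tree (by simp)
    exact ⟨a, fun ρ => (hc ρ).imp fun e he => he.2, ht⟩
  choose a hc ht using tree
  choose e he using hc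
  let U : Ultrafilter ℕ := Filter.hyperfilter ℕ
  have large (k : ℕ) : ∀ᶠ n in (U : Filter ℕ), k ≤ n :=
    Nat.hyperfilter_le_atTop (Filter.eventually_ge_atTop k)
  let N := (U : Filter ℕ).Product fun _ => M
  have : N ⊨ L.completeTheory M := ⟨fun ψ hψ =>
    (Ultraproduct.sentence_realize ψ).2 (Filter.Eventually.of_forall fun _ => hψ)⟩
  have los (x : Fin mx → ℕ → M) (y : Fin my → ℕ → M) :
      φ.Realize (Sum.elim (fun i => (x i : N)) fun i => (y i : N)) ↔
        ∀ᶠ n in (U : Filter ℕ), φ.Realize (Sum.elim (fun i => x i n) fun i => y i n) := by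
    convert Ultraproduct.realize_formula_cast (u := U) φ (Sum.elim x y) using 2
    · ext (i | i) <;> rfl
    · ext n
      exact iff_of_eq (congrArg φ.Realize (funext fun i => by cases i <;> rfl))
  refine ⟨Theory.ModelType.of _ N, fun η i => ((fun n => a n η i : ℕ → M) : N),
    fun ρ => ⟨fun i => ((fun n => e n ρ i : ℕ → M) : N), fun k => ?_⟩, ?_⟩
  · exact (los _ _).2 ((large k).mono fun n hn => he n ρ k hn)
  · rintro ν η hνη ⟨x, h₁, h₂⟩
    obtain ⟨x, rfl⟩ : ∃ x' : Fin mx → ℕ → M, (fun i => (x' i : N)) = x :=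
      ⟨fun i => Quotient.out (s := (U : Filter ℕ).productSetoid fun _ => M) (x i),
        funext fun i => Quotient.out_eq _⟩
    obtain ⟨n, ⟨hn₁, hn₂⟩, hn⟩ :=
      ((((los _ _).1 h₁).and ((los _ _).1 h₂)).and (large η.length)).exists
    exact ht n ν η hn hνη ⟨_, hn₁, hn₂⟩

/-- A formula over `A` in finitely many variables as a `ParamFormula`. -/
theorem exists_paramFormula {my : ℕ} {A : Set M} [Nonempty A] (θ : L.Formula (Fin my ⊕ A)) :
    ∃ ψ : ParamFormula L M my, (∀ j, ψ.par j ∈ A) ∧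
      ∀ b : Fin my → M, ψ.Realize b ↔ θ.Realize (Sum.elim b (↑)) := by
  classical
  let S := BoundedFormula.freeVarFinset θ
  let f : S → Fin my ⊕ Fin S.card := fun s => s.1.elim Sum.inl fun _ => Sum.inr (S.equivFin s)
  let g : Fin my ⊕ A → A := Sum.elim (fun _ => Classical.arbitrary A) id
  refine ⟨⟨S.card, BoundedFormula.restrictFreeVar θ f, fun j => g (S.equivFin.symm j)⟩,
    fun j => Subtype.coe_prop _, fun b => BoundedFormula.realize_restrictFreeVar _ ?_⟩
  rintro ⟨i | x, hx⟩ <;> simp [f, g]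

/-- Suppose the formula `φ(x̄,ȳ)` does not exemplify SOP₁ in `T` (the
complete theory of the monster model `𝔠`); this holds in particular if `T` is NSOP₁.
Assume `M₁ ≺ M₂ ≺ 𝔠`, `p` is a (not necessarily complete) type over `M₂` containing the
formula `φ(x̄, b̄*)` for some `b̄* ∈ M₂ \ M₁`.  Then there is a finite `q' ⊆ tp(b̄*/M₁)` such
that at least one of the following holds:
(i) for every `b̄ ∈ M₁` realizing `q'(ȳ)`, `φ(x̄, b̄) ∉ p`; or
(ii) for every `b̄ ∈ M₁` realizing `q'(ȳ)`, the set `{φ(x̄, b̄), φ(x̄, b̄*)}` is consistent. -/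
theorem finite_subtype_of_NSOP1 (𝔠 : Type) [L.Structure 𝔠] [Nonempty 𝔠]
    {mx my : ℕ} (φ : L.Formula (Fin mx ⊕ Fin my))
    (hNSOP : ¬ ∃ N : Theory.ModelType.{0, 0, 0} (L.completeTheory 𝔠), ExemplifiesSOP1 φ N)
    (M₁ M₂ : L.ElementarySubstructure 𝔠) (h12 : (M₁ : Set 𝔠) ⊆ (M₂ : Set 𝔠))
    (p : Set (ParamFormula L 𝔠 mx))
    (hpar : ∀ ψ ∈ p, ∀ j, ψ.par j ∈ M₂) (hpcon : Consistent p)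
    (bs : Fin my → 𝔠) (hbs₂ : ∀ j, bs j ∈ M₂) (hbs₁ : ¬ ∀ j, bs j ∈ M₁)
    (hφp : (⟨my, φ, bs⟩ : ParamFormula L 𝔠 mx) ∈ p) :
    ∃ q' : Set (ParamFormula L 𝔠 my), q'.Finite ∧
      (∀ ψ ∈ q', (∀ j, ψ.par j ∈ M₁) ∧ ψ.Realize bs) ∧
      ((∀ b : Fin my → 𝔠, (∀ j, b j ∈ M₁) → Realizes q' b →
          (⟨my, φ, b⟩ : ParamFormula L 𝔠 mx) ∉ p) ∨
        (∀ b : Fin my → 𝔠, (∀ j, b j ∈ M₁) → Realizes q' b →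
          ∃ e : Fin mx → 𝔠, φ.Realize (Sum.elim e b) ∧ φ.Realize (Sum.elim e bs))) := by
  by_contra hcon
  have : Nonempty (M₁ : Set 𝔠) := inferInstanceAs (Nonempty M₁)
  obtain ⟨e, he⟩ := hpcon
  have approx (θ : L.Formula (Fin my ⊕ (M₁ : Set 𝔠))) (hθ : θ.Realize (Sum.elim bs (↑))) :
      (∃ b : Fin my → (M₁ : Set 𝔠), θ.Realize (Sum.elim ((↑) ∘ b) (↑) : Fin my ⊕ _ → 𝔠) ∧
        φ.Realize (Sum.elim e ((↑) ∘ b))) ∧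
      ∃ b : Fin my → (M₁ : Set 𝔠), θ.Realize (Sum.elim ((↑) ∘ b) (↑) : Fin my ⊕ _ → 𝔠) ∧
        Incompatible φ ((↑) ∘ b) bs := by
    obtain ⟨ψ, hψ, hψθ⟩ := exists_paramFormula θ
    have hq := not_and.1 (not_and.1 (not_exists.1 hcon {ψ}) (Set.finite_singleton ψ))
      (by rintro _ rfl; exact ⟨hψ, (hψθ bs).2 hθ⟩)
    push Not at hq
    obtain ⟨⟨b, hb, hbψ, hbp⟩, ⟨d, hd, hdψ, hdi⟩⟩ := hq
    exact ⟨⟨fun j => ⟨b j, hb j⟩, (hψθ b).1 (hbψ ψ rfl), he _ hbp⟩,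
      ⟨fun j => ⟨d j, hd j⟩, (hψθ d).1 (hdψ ψ rfl), fun ⟨x, hx, hx'⟩ => hdi x hx hx'⟩⟩
  exact hNSOP (exists_exemplifiesSOP1_of_listRankGE φ fun n =>
    listRankGE_of_approximations φ bs e (fun θ hθ => (approx θ hθ).1)
      (fun θ hθ => (approx θ hθ).2) n [] [] (by simp) (by simp))

end SopPaper
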